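/- arXiv:0903.1014 — 3 statements merged into one kernel-verified Lean document; each statement's English description precedes it below -/
import Mathlib

section
/- Fix q ≥ 1. Let L : ℝ × ℝ^q × ℝ^q → ℝ be a smooth Lagrangian in the variables (x,u,p) with u = (u¹,…,u^q) and p = (p¹,…,p^q), let η¹,…,η^q, R : ℝ × ℝ^q → ℝ be smooth functions of (x,u), and let λ : ℝ × ℝ^q × ℝ^q → ℝ be smooth. Define the truncated total derivative D_xF(x,u,p) = ∂_xF(x,u) + Σ_a p^a·∂_{u^a}F(x,u) for F a function of (x,u). Suppose that identically on ℝ × ℝ^q × ℝ^q: Σ_a η^a·∂_{u^a}L + Σ_a (D_xη^a + λ·η^a)·∂_{p^a}L = D_xR + λ·R. Define I(x,u,p) = Σ_a η^a(x,u)·∂_{p^a}L(x,u,p) − R(x,u). Then for every open interval J ⊆ ℝ and every twice differentiable u : J → ℝ^q solving the system of Euler-Lagrange equations d/dx[∂_{p^a}L(x,u(x),u'(x))] = ∂_{u^a}L(x,u(x),u'(x)) on J for each a = 1,…,q, the function φ(x) = I(x,u(x),u'(x)) satisfies φ'(x) = −λ(x,u(x),u'(x))·φ(x) for all x ∈ J.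 -/
open Finset in
/-- Truncated total derivative
`D_x F (x,u,p) = ∂_x F(x,u) + Σ_a p^a ∂_{u^a} F(x,u)` for `F` a function of `(x,u)`. -/
noncomputable def DxV {q : ℕ} (F : ℝ → (Fin q → ℝ) → ℝ) (x : ℝ) (u p : Fin q → ℝ) : ℝ :=
  deriv (fun t => F t u) x
    + ∑ a : Fin q, p a * deriv (fun s => F x (Function.update u a s)) (u a)

/-- Partial derivative of the Lagrangian with respect to `u^a`. -/
noncomputable def LuV {q : ℕ} (L : ℝ → (Fin q → ℝ) → (Fin q → ℝ) → ℝ) (a : Fin q)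
    (x : ℝ) (u p : Fin q → ℝ) : ℝ :=
  deriv (fun s => L x (Function.update u a s) p) (u a)

/-- Partial derivative of the Lagrangian with respect to `p^a`. -/
noncomputable def LpV {q : ℕ} (L : ℝ → (Fin q → ℝ) → (Fin q → ℝ) → ℝ) (a : Fin q)
    (x : ℝ) (u p : Fin q → ℝ) : ℝ :=
  deriv (fun s => L x u (Function.update p a s)) (p a)

/-!
Along any curve, whether or not it solves the Euler-Lagrange equations, the Noether function
satisfies `dI/dx + λ I = Σ_a η^a (d/dx[∂_{p^a}L] - ∂_{u^a}L)`: the product rule produces the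
terms `(D_x η^a) ∂_{p^a}L` and `-D_x R`, and the symmetry condition trades exactly these for
`-λ I - Σ_a η^a ∂_{u^a}L`. On solutions the right-hand side vanishes.
-/

section

variable {q : ℕ}

/-- The infinitesimal condition, at the point `(x, u, p)` of the first jet space, for
`Σ_a η^a ∂_{u^a}` to be a divergence λ-variational symmetry of `L` with divergence term `R`;
`D_x η^a + λ η^a` is the first-order coefficient of its λ-prolongation. -/
def IsDivLambdaSymmetryAt (L lam : ℝ → (Fin q → ℝ) → (Fin q → ℝ) → ℝ)
    (η : Fin q → ℝ → (Fin q → ℝ) → ℝ) (R : ℝ → (Fin q → ℝ) → ℝ)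
    (x : ℝ) (u p : Fin q → ℝ) : Prop :=
  (∑ a, η a x u * LuV L a x u p)
    + (∑ a, (DxV (η a) x u p + lam x u p * η a x u) * LpV L a x u p)
  = DxV R x u p + lam x u p * R x u

/-- The Noether function `I = X⌟Θ - R` of the vertical field `X = Σ_a η^a ∂_{u^a}`. -/
noncomputable def noetherFunction (L : ℝ → (Fin q → ℝ) → (Fin q → ℝ) → ℝ)
    (η : Fin q → ℝ → (Fin q → ℝ) → ℝ) (R : ℝ → (Fin q → ℝ) → ℝ)
    (x : ℝ) (u p : Fin q → ℝ) : ℝ :=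
  (∑ a, η a x u * LpV L a x u p) - R x u

/-- The `a`-th Euler-Lagrange expression `d/dx[∂_{p^a}L] - ∂_{u^a}L` at `x`, along the curve
`t ↦ (t, u t, p t)` in the first jet space. The velocity `p` is a separate argument, so that the
curve need not be the prolongation of `u`. -/
noncomputable def eulerLagrangeAlong (L : ℝ → (Fin q → ℝ) → (Fin q → ℝ) → ℝ) (a : Fin q)
    (u p : ℝ → Fin q → ℝ) (x : ℝ) : ℝ :=
  deriv (fun t => LpV L a t (u t) (p t)) x - LuV L a x (u x) (p x)

theorem DxV_eq_fderiv {F : ℝ → (Fin q → ℝ) → ℝ} {x : ℝ} {u : Fin q → ℝ}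
    (hF : DifferentiableAt ℝ (fun z : ℝ × (Fin q → ℝ) => F z.1 z.2) (x, u)) (p : Fin q → ℝ) :
    DxV F x u p = fderiv ℝ (fun z : ℝ × (Fin q → ℝ) => F z.1 z.2) (x, u) (1, p) := by
  set F' := fderiv ℝ (fun z : ℝ × (Fin q → ℝ) => F z.1 z.2) (x, u)
  have hx : deriv (fun t => F t u) x = F' (1, 0) :=
    (hF.hasFDerivAt.comp_hasDerivAt_of_eq x
      ((hasDerivAt_id x).prodMk (hasDerivAt_const x u)) rfl).deriv
  have hu (a : Fin q) :
      deriv (fun s => F x (Function.update u a s)) (u a) = F' (0, Pi.single a 1) :=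
    (hF.hasFDerivAt.comp_hasDerivAt_of_eq (u a)
      ((hasDerivAt_const (u a) x).prodMk (hasDerivAt_update u a (u a))) (by simp)).deriv
  have hsplit : ((1 : ℝ), p) = (1, 0) + ∑ a, p a • ((0 : ℝ), (Pi.single a 1 : Fin q → ℝ)) := by
    ext b <;> simp [Prod.fst_sum, Prod.snd_sum, Finset.sum_apply, Pi.single_apply]
  simp only [DxV, hx, hu, hsplit, map_add, map_sum, map_smul, smul_eq_mul]

theorem hasDerivAt_DxV_along {F : ℝ → (Fin q → ℝ) → ℝ} {u : ℝ → Fin q → ℝ}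
    {u' : Fin q → ℝ} {x : ℝ}
    (hF : DifferentiableAt ℝ (fun z : ℝ × (Fin q → ℝ) => F z.1 z.2) (x, u x))
    (hu : HasDerivAt u u' x) :
    HasDerivAt (fun t => F t (u t)) (DxV F x (u x) u') x := by
  rw [DxV_eq_fderiv hF]
  exact hF.hasFDerivAt.comp_hasDerivAt x ((hasDerivAt_id x).prodMk hu)

theorem LpV_eq_fderiv {L : ℝ → (Fin q → ℝ) → (Fin q → ℝ) → ℝ}
    {z : ℝ × (Fin q → ℝ) × (Fin q → ℝ)}
    (hL : DifferentiableAt ℝ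
      (fun z : ℝ × (Fin q → ℝ) × (Fin q → ℝ) => L z.1 z.2.1 z.2.2) z) (a : Fin q) :
    LpV L a z.1 z.2.1 z.2.2 =
      fderiv ℝ (fun z : ℝ × (Fin q → ℝ) × (Fin q → ℝ) => L z.1 z.2.1 z.2.2) z
        (0, 0, Pi.single a 1) :=
  (hL.hasFDerivAt.comp_hasDerivAt_of_eq (z.2.2 a)
    ((hasDerivAt_const _ z.1).prodMk
      ((hasDerivAt_const _ z.2.1).prodMk (hasDerivAt_update z.2.2 a _))) (by simp)).deriv

theorem differentiableAt_LpV {L : ℝ → (Fin q → ℝ) → (Fin q → ℝ) → ℝ}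
    {z : ℝ × (Fin q → ℝ) × (Fin q → ℝ)}
    (hL : ContDiffAt ℝ 2
      (fun z : ℝ × (Fin q → ℝ) × (Fin q → ℝ) => L z.1 z.2.1 z.2.2) z) (a : Fin q) :
    DifferentiableAt ℝ
      (fun z : ℝ × (Fin q → ℝ) × (Fin q → ℝ) => LpV L a z.1 z.2.1 z.2.2) z := by
  have hfderiv := (hL.fderiv_right (m := 1) le_rfl).differentiableAt one_ne_zero
  refine (hfderiv.clm_apply (differentiableAt_const (0, 0, Pi.single a 1))).congr_of_eventuallyEq ?_
  filter_upwards [hL.eventually (by simp)] with w hw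
  exact LpV_eq_fderiv (hw.differentiableAt two_ne_zero) a

theorem hasDerivAt_noetherFunction_along {L : ℝ → (Fin q → ℝ) → (Fin q → ℝ) → ℝ}
    {η : Fin q → ℝ → (Fin q → ℝ) → ℝ} {R : ℝ → (Fin q → ℝ) → ℝ}
    {u p : ℝ → Fin q → ℝ} {x : ℝ}
    (hL : ContDiffAt ℝ 2 (fun z : ℝ × (Fin q → ℝ) × (Fin q → ℝ) => L z.1 z.2.1 z.2.2)
      (x, u x, p x))
    (hη : ∀ a, DifferentiableAt ℝ (fun z : ℝ × (Fin q → ℝ) => η a z.1 z.2) (x, u x))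
    (hR : DifferentiableAt ℝ (fun z : ℝ × (Fin q → ℝ) => R z.1 z.2) (x, u x))
    (hu : HasDerivAt u (p x) x) (hp : DifferentiableAt ℝ p x) :
    HasDerivAt (fun t => noetherFunction L η R t (u t) (p t))
      ((∑ a, (DxV (η a) x (u x) (p x) * LpV L a x (u x) (p x)
          + η a x (u x) * deriv (fun t => LpV L a t (u t) (p t)) x))
        - DxV R x (u x) (p x)) x := by
  have hjet : DifferentiableAt ℝ (fun t => (t, u t, p t)) x :=
    differentiableAt_id.prodMk (hu.differentiableAt.prodMk hp)
  have hmomentum (a : Fin q) : DifferentiableAt ℝ (fun t => LpV L a t (u t) (p t)) x :=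
    (differentiableAt_LpV hL a).fun_comp' x hjet
  exact (HasDerivAt.fun_sum fun a _ =>
    (hasDerivAt_DxV_along (hη a) hu).mul (hmomentum a).hasDerivAt).sub
      (hasDerivAt_DxV_along hR hu)

theorem lambda_variational_symmetry_noether_identity_systems_general
    {L lam : ℝ → (Fin q → ℝ) → (Fin q → ℝ) → ℝ}
    {η : Fin q → ℝ → (Fin q → ℝ) → ℝ} {R : ℝ → (Fin q → ℝ) → ℝ}
    {u p : ℝ → Fin q → ℝ} {x : ℝ}
    (hL : ContDiffAt ℝ 2 (fun z : ℝ × (Fin q → ℝ) × (Fin q → ℝ) => L z.1 z.2.1 z.2.2)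
      (x, u x, p x))
    (hη : ∀ a, DifferentiableAt ℝ (fun z : ℝ × (Fin q → ℝ) => η a z.1 z.2) (x, u x))
    (hR : DifferentiableAt ℝ (fun z : ℝ × (Fin q → ℝ) => R z.1 z.2) (x, u x))
    (hsym : IsDivLambdaSymmetryAt L lam η R x (u x) (p x))
    (hu : HasDerivAt u (p x) x) (hp : DifferentiableAt ℝ p x) :
    HasDerivAt (fun t => noetherFunction L η R t (u t) (p t))
      (-(lam x (u x) (p x)) * noetherFunction L η R x (u x) (p x)
        + ∑ a, η a x (u x) * eulerLagrangeAlong L a u p x) x := by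
  refine (hasDerivAt_noetherFunction_along hL hη hR hu hp).congr_deriv ?_
  simp only [IsDivLambdaSymmetryAt, noetherFunction, eulerLagrangeAlong, add_mul, mul_sub,
    mul_assoc, Finset.sum_add_distrib, Finset.sum_sub_distrib, ← Finset.mul_sum] at hsym ⊢
  linear_combination hsym

end

/-- For a system of `q` Euler–Lagrange equations: if the vertical vector field `Σ_a η^a ∂_{u^a}`
is a divergence λ-variational symmetry of `L` with divergence term `R`, then along every solution
of the Euler–Lagrange system the function `φ(x) = I(x,u(x),u'(x))`, where
`I = Σ_a η^a ∂_{p^a}L − R`, satisfies `φ' = −λ φ`. -/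
theorem lambda_variational_symmetry_noether_identity_systems
    (q : ℕ) (hq : 1 ≤ q)
    (L lam : ℝ → (Fin q → ℝ) → (Fin q → ℝ) → ℝ)
    (η : Fin q → ℝ → (Fin q → ℝ) → ℝ) (R : ℝ → (Fin q → ℝ) → ℝ)
    (hL : ContDiff ℝ (⊤ : ℕ∞) fun z : ℝ × (Fin q → ℝ) × (Fin q → ℝ) => L z.1 z.2.1 z.2.2)
    (hη : ∀ a : Fin q, ContDiff ℝ (⊤ : ℕ∞) fun z : ℝ × (Fin q → ℝ) => η a z.1 z.2)
    (hR : ContDiff ℝ (⊤ : ℕ∞) fun z : ℝ × (Fin q → ℝ) => R z.1 z.2)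
    (hlam : ContDiff ℝ (⊤ : ℕ∞) fun z : ℝ × (Fin q → ℝ) × (Fin q → ℝ) => lam z.1 z.2.1 z.2.2)
    (hsym : ∀ (x : ℝ) (u p : Fin q → ℝ),
      (∑ a : Fin q, η a x u * LuV L a x u p)
        + (∑ a : Fin q, (DxV (η a) x u p + lam x u p * η a x u) * LpV L a x u p)
      = DxV R x u p + lam x u p * R x u)
    (J : Set ℝ) (hJopen : IsOpen J) (hJconn : J.OrdConnected)
    (u : ℝ → Fin q → ℝ)
    (hu1 : ∀ (a : Fin q), ∀ x ∈ J, DifferentiableAt ℝ (fun t => u t a) x)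
    (hu2 : ∀ (a : Fin q), ∀ x ∈ J,
      DifferentiableAt ℝ (fun t => deriv (fun s => u s a) t) x)
    (hEL : ∀ (a : Fin q), ∀ x ∈ J,
      deriv (fun t => LpV L a t (u t) (fun b => deriv (fun s => u s b) t)) x
        = LuV L a x (u x) (fun b => deriv (fun s => u s b) x)) :
    ∀ x ∈ J, HasDerivAt
      (fun t => (∑ a : Fin q, η a t (u t) * LpV L a t (u t) (fun b => deriv (fun s => u s b) t))
        - R t (u t))
      (-(lam x (u x) (fun b => deriv (fun s => u s b) x)) *
        ((∑ a : Fin q, η a x (u x) * LpV L a x (u x) (fun b => deriv (fun s => u s b) x))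
          - R x (u x))) x := by
  intro x hx
  have hoffShell := lambda_variational_symmetry_noether_identity_systems_general
    (p := fun t b => deriv (fun s => u s b) t) (contDiff_infty.1 hL 2).contDiffAt
    (fun a => (hη a).differentiable (by simp) _) (hR.differentiable (by simp) _) (hsym x _ _)
    (hasDerivAt_pi.2 fun a => (hu1 a x hx).hasDerivAt) (differentiableAt_pi.2 fun a => hu2 a x hx)
  simpa only [noetherFunction, eulerLagrangeAlong, hEL _ x hx, sub_self, mul_zero,
    Finset.sum_const_zero, add_zero] using hoffShell
end

section
/- Let L : ℝ³ → ℝ be a smooth Lagrangian in the variables (x,u,p), let ξ, η, R : ℝ² → ℝ be smooth functions of (x,u), and let λ : ℝ³ → ℝ be a smooth function of (x,u,p). Define D_xF(x,u,p) = ∂_xF(x,u) + p·∂_uF(x,u), η₁ = D_xη − p·D_xξ + λ·(η − ξ·p), and suppose the divergence λ-variational symmetry condition ξ·∂_xL + η·∂_uL + η₁·∂_pL + L·(D_xξ + λ·ξ) = D_xR + λ·R holds identically on ℝ³. Define I(x,u,p) = ξ(x,u)·(L(x,u,p) − p·∂_pL(x,u,p)) + η(x,u)·∂_pL(x,u,p)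 − R(x,u). Let J ⊆ ℝ be an open interval, let u : J → ℝ be twice differentiable and solve the Euler-Lagrange equation d/dx[∂_pL(x,u(x),u'(x))] = ∂_uL(x,u(x),u'(x)) on J, and let w : J → ℝ be differentiable with w'(x) = λ(x,u(x),u'(x)) for all x ∈ J. Then the function x ↦ e^{w(x)}·I(x,u(x),u'(x)) is constant on J. -/
/-- Truncated total derivative `D_x F (x,u,p) = ∂_x F(x,u) + p ∂_u F(x,u)`. -/
noncomputable def Dx (F : ℝ → ℝ → ℝ) (x u p : ℝ) : ℝ :=
  deriv (fun t => F t u) x + p * deriv (fun v => F x v) u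

/-- Partial derivative of the Lagrangian with respect to `x`. -/
noncomputable def Lx (L : ℝ → ℝ → ℝ → ℝ) (x u p : ℝ) : ℝ := deriv (fun t => L t u p) x

/-- Partial derivative of the Lagrangian with respect to `u`. -/
noncomputable def Lu (L : ℝ → ℝ → ℝ → ℝ) (x u p : ℝ) : ℝ := deriv (fun v => L x v p) u

/-- Partial derivative of the Lagrangian with respect to `p`. -/
noncomputable def Lp (L : ℝ → ℝ → ℝ → ℝ) (x u p : ℝ) : ℝ := deriv (fun q => L x u q) p

/-- First λ-prolonged coefficient `η₁ = D_x η − p D_x ξ + λ (η − ξ p)`. -/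
noncomputable def eta1 (ξ η : ℝ → ℝ → ℝ) (lam : ℝ → ℝ → ℝ → ℝ) (x u p : ℝ) : ℝ :=
  Dx η x u p - p * Dx ξ x u p + lam x u p * (η x u - ξ x u * p)

/-- The Noether-type function `I = ξ (L − p ∂_p L) + η ∂_p L − R`. -/
noncomputable def NoetherI (L : ℝ → ℝ → ℝ → ℝ) (ξ η R : ℝ → ℝ → ℝ) (x u p : ℝ) : ℝ :=
  ξ x u * (L x u p - p * Lp L x u p) + η x u * Lp L x u p - R x u

/-!
Along any curve `(x, u, u')` the off-shell Noether identity
`d/dx I = Δ - λ I + (η - ξ u') (d/dx ∂_p L - ∂_u L)` holds, where `Δ` is the defect of the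
λ-variational symmetry condition. For a symmetry, on solutions of the Euler–Lagrange equation, it
reduces to `I' = -λ I`, so `e^w` with `w' = λ` is an integrating factor.
-/

/-- The defect of the divergence λ-variational symmetry condition, namely the difference of its two
sides `X⁽¹⁾L + L (D_x ξ + λ ξ)` and `D_x R + λ R`. -/
noncomputable def symmetryDefect (L lam : ℝ → ℝ → ℝ → ℝ) (ξ η R : ℝ → ℝ → ℝ) (x u p : ℝ) : ℝ :=
  ξ x u * Lx L x u p + η x u * Lu L x u p + eta1 ξ η lam x u p * Lp L x u p
    + L x u p * (Dx ξ x u p + lam x u p * ξ x u) - (Dx R x u p + lam x u p * R x u)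

theorem fderiv_apply_one_eq_Dx {F : ℝ → ℝ → ℝ} {x u : ℝ}
    (hF : DifferentiableAt ℝ (fun z : ℝ × ℝ => F z.1 z.2) (x, u)) (p : ℝ) :
    fderiv ℝ (fun z : ℝ × ℝ => F z.1 z.2) (x, u) (1, p) = Dx F x u p := by
  have hF' := hF.hasFDerivAt
  set F' := fderiv ℝ (fun z : ℝ × ℝ => F z.1 z.2) (x, u)
  have hx : HasDerivAt (fun t => F t u) (F' (1, 0)) x :=
    hF'.comp_hasDerivAt_of_eq x ((hasDerivAt_id x).prodMk (hasDerivAt_const x u)) rfl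
  have hu : HasDerivAt (fun v => F x v) (F' (0, 1)) u :=
    hF'.comp_hasDerivAt_of_eq u ((hasDerivAt_const u x).prodMk (hasDerivAt_id u)) rfl
  rw [Dx, hx.deriv, hu.deriv, ← smul_eq_mul, ← map_smul, ← map_add]
  simp

theorem fderiv_apply_eq_Lx_add_Lu_add_Lp {L : ℝ → ℝ → ℝ → ℝ} {x u p : ℝ}
    (hL : DifferentiableAt ℝ (fun z : ℝ × ℝ × ℝ => L z.1 z.2.1 z.2.2) (x, u, p)) (a b c : ℝ) :
    fderiv ℝ (fun z : ℝ × ℝ × ℝ => L z.1 z.2.1 z.2.2) (x, u, p) (a, b, c)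
      = a * Lx L x u p + b * Lu L x u p + c * Lp L x u p := by
  have hL' := hL.hasFDerivAt
  set L' := fderiv ℝ (fun z : ℝ × ℝ × ℝ => L z.1 z.2.1 z.2.2) (x, u, p)
  have hx : HasDerivAt (fun t => L t u p) (L' (1, 0, 0)) x :=
    hL'.comp_hasDerivAt_of_eq x
      ((hasDerivAt_id x).prodMk ((hasDerivAt_const x u).prodMk (hasDerivAt_const x p))) rfl
  have hu : HasDerivAt (fun v => L x v p) (L' (0, 1, 0)) u :=
    hL'.comp_hasDerivAt_of_eq u
      ((hasDerivAt_const u x).prodMk ((hasDerivAt_id u).prodMk (hasDerivAt_const u p))) rfl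
  have hp : HasDerivAt (fun q => L x u q) (L' (0, 0, 1)) p :=
    hL'.comp_hasDerivAt_of_eq p
      ((hasDerivAt_const p x).prodMk ((hasDerivAt_const p u).prodMk (hasDerivAt_id p))) rfl
  simp only [Lx, Lu, Lp, hx.deriv, hu.deriv, hp.deriv, ← smul_eq_mul, ← map_smul, ← map_add]
  simp

theorem hasDerivAt_comp_graph {F : ℝ → ℝ → ℝ} {u : ℝ → ℝ} {x u' : ℝ}
    (hF : DifferentiableAt ℝ (fun z : ℝ × ℝ => F z.1 z.2) (x, u x)) (hu : HasDerivAt u u' x) :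
    HasDerivAt (fun t => F t (u t)) (Dx F x (u x) u') x := by
  rw [← fderiv_apply_one_eq_Dx hF u']
  exact hF.hasFDerivAt.comp_hasDerivAt_of_eq x ((hasDerivAt_id x).prodMk hu) rfl

theorem hasDerivAt_comp_curve {L : ℝ → ℝ → ℝ → ℝ} {u p : ℝ → ℝ} {x u' p' : ℝ}
    (hL : DifferentiableAt ℝ (fun z : ℝ × ℝ × ℝ => L z.1 z.2.1 z.2.2) (x, u x, p x))
    (hu : HasDerivAt u u' x) (hp : HasDerivAt p p' x) :
    HasDerivAt (fun t => L t (u t) (p t))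
      (Lx L x (u x) (p x) + u' * Lu L x (u x) (p x) + p' * Lp L x (u x) (p x)) x := by
  rw [← one_mul (Lx L x (u x) (p x)), ← fderiv_apply_eq_Lx_add_Lu_add_Lp hL 1 u' p']
  exact hL.hasFDerivAt.comp_hasDerivAt_of_eq x ((hasDerivAt_id x).prodMk (hu.prodMk hp)) rfl

theorem differentiable_Lp {L : ℝ → ℝ → ℝ → ℝ}
    (hL : ContDiff ℝ 2 fun z : ℝ × ℝ × ℝ => L z.1 z.2.1 z.2.2) :
    Differentiable ℝ fun z : ℝ × ℝ × ℝ => Lp L z.1 z.2.1 z.2.2 := by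
  have hLp : (fun z : ℝ × ℝ × ℝ => Lp L z.1 z.2.1 z.2.2) =
      fun z => fderiv ℝ (fun z : ℝ × ℝ × ℝ => L z.1 z.2.1 z.2.2) z (0, 0, 1) := by
    funext ⟨x, u, p⟩
    simp [fderiv_apply_eq_Lx_add_Lu_add_Lp (hL.differentiable two_ne_zero (x, u, p))]
  have hL' : ContDiff ℝ 1 (fderiv ℝ fun z : ℝ × ℝ × ℝ => L z.1 z.2.1 z.2.2) :=
    hL.fderiv_right one_add_one_eq_two.le
  rw [hLp]
  exact (hL'.differentiable one_ne_zero).clm_apply (differentiable_const _)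

theorem differentiableAt_Lp_comp_curve {L : ℝ → ℝ → ℝ → ℝ} {u p : ℝ → ℝ} {x : ℝ}
    (hL : ContDiff ℝ 2 fun z : ℝ × ℝ × ℝ => L z.1 z.2.1 z.2.2)
    (hu : DifferentiableAt ℝ u x) (hp : DifferentiableAt ℝ p x) :
    DifferentiableAt ℝ (fun t => Lp L t (u t) (p t)) x :=
  (hasDerivAt_comp_curve (differentiable_Lp hL _) hu.hasDerivAt hp.hasDerivAt).differentiableAt

theorem hasDerivAt_NoetherI_comp {L : ℝ → ℝ → ℝ → ℝ} {ξ η R : ℝ → ℝ → ℝ} {u p : ℝ → ℝ}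
    {x m' : ℝ} (lam : ℝ → ℝ → ℝ → ℝ)
    (hL : DifferentiableAt ℝ (fun z : ℝ × ℝ × ℝ => L z.1 z.2.1 z.2.2) (x, u x, p x))
    (hξ : DifferentiableAt ℝ (fun z : ℝ × ℝ => ξ z.1 z.2) (x, u x))
    (hη : DifferentiableAt ℝ (fun z : ℝ × ℝ => η z.1 z.2) (x, u x))
    (hR : DifferentiableAt ℝ (fun z : ℝ × ℝ => R z.1 z.2) (x, u x))
    (hu : HasDerivAt u (p x) x) (hp : DifferentiableAt ℝ p x)
    (hm : HasDerivAt (fun t => Lp L t (u t) (p t)) m' x) :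
    HasDerivAt (fun t => NoetherI L ξ η R t (u t) (p t))
      (symmetryDefect L lam ξ η R x (u x) (p x)
        - lam x (u x) (p x) * NoetherI L ξ η R x (u x) (p x)
        + (η x (u x) - ξ x (u x) * p x) * (m' - Lu L x (u x) (p x))) x := by
  have henergy : HasDerivAt (fun t => L t (u t) (p t) - p t * Lp L t (u t) (p t))
      (Lx L x (u x) (p x) - p x * (m' - Lu L x (u x) (p x))) x :=
    ((hasDerivAt_comp_curve hL hu hp.hasDerivAt).fun_sub
      (hp.hasDerivAt.fun_mul hm)).congr_deriv (by ring)
  refine ((((hasDerivAt_comp_graph hξ hu).fun_mul henergy).fun_add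
    ((hasDerivAt_comp_graph hη hu).fun_mul hm)).fun_sub
      (hasDerivAt_comp_graph hR hu)).congr_deriv ?_
  simp only [symmetryDefect, eta1, NoetherI]
  ring

theorem exp_mul_eq_of_hasDerivAt_neg_mul {J : Set ℝ} (hJ : J.OrdConnected) {a w f : ℝ → ℝ}
    (hw : ∀ x ∈ J, HasDerivAt w (a x) x) (hf : ∀ x ∈ J, HasDerivAt f (-(a x * f x)) x)
    {x y : ℝ} (hx : x ∈ J) (hy : y ∈ J) :
    Real.exp (w x) * f x = Real.exp (w y) * f y := by
  have hconst : ∀ t ∈ J, HasDerivAt (fun s => Real.exp (w s) * f s) 0 t := fun t ht =>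
    ((hw t ht).exp.fun_mul (hf t ht)).congr_deriv (by ring)
  have hle := hJ.convex.norm_image_sub_le_of_norm_hasDerivWithin_le (C := 0)
    (fun t ht => (hconst t ht).hasDerivWithinAt) (fun _ _ => norm_zero.le) hy hx
  rwa [zero_mul, norm_le_zero_iff, sub_eq_zero] at hle

theorem lambda_covering_first_integral_general {L lam : ℝ → ℝ → ℝ → ℝ} {ξ η R : ℝ → ℝ → ℝ}
    {J : Set ℝ} (hJ : J.OrdConnected) {u p w : ℝ → ℝ}
    (hL : ∀ x ∈ J, DifferentiableAt ℝ (fun z : ℝ × ℝ × ℝ => L z.1 z.2.1 z.2.2) (x, u x, p x))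
    (hξ : ∀ x ∈ J, DifferentiableAt ℝ (fun z : ℝ × ℝ => ξ z.1 z.2) (x, u x))
    (hη : ∀ x ∈ J, DifferentiableAt ℝ (fun z : ℝ × ℝ => η z.1 z.2) (x, u x))
    (hR : ∀ x ∈ J, DifferentiableAt ℝ (fun z : ℝ × ℝ => R z.1 z.2) (x, u x))
    (hsym : ∀ x ∈ J, symmetryDefect L lam ξ η R x (u x) (p x) = 0)
    (hu : ∀ x ∈ J, HasDerivAt u (p x) x) (hp : ∀ x ∈ J, DifferentiableAt ℝ p x)
    (hEL : ∀ x ∈ J, HasDerivAt (fun t => Lp L t (u t) (p t)) (Lu L x (u x) (p x)) x)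
    (hw : ∀ x ∈ J, HasDerivAt w (lam x (u x) (p x)) x) {x y : ℝ} (hx : x ∈ J) (hy : y ∈ J) :
    Real.exp (w x) * NoetherI L ξ η R x (u x) (p x)
      = Real.exp (w y) * NoetherI L ξ η R y (u y) (p y) := by
  have hI : ∀ t ∈ J, HasDerivAt (fun s => NoetherI L ξ η R s (u s) (p s))
      (-(lam t (u t) (p t) * NoetherI L ξ η R t (u t) (p t))) t := fun t ht =>
    (hasDerivAt_NoetherI_comp lam (hL t ht) (hξ t ht) (hη t ht) (hR t ht) (hu t ht) (hp t ht)
      (hEL t ht)).congr_deriv (by simp [hsym t ht])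
  exact exp_mul_eq_of_hasDerivAt_neg_mul hJ hw hI hx hy

/-- Given a divergence λ-variational symmetry of `L`, the function `Ĩ = e^w · I` is a first
integral of the λ-covering system `{Euler–Lagrange equation, w' = λ}`: it is constant along every
solution `(u,w)` of the covering system. -/
theorem lambda_covering_first_integral
    (L lam : ℝ → ℝ → ℝ → ℝ) (ξ η R : ℝ → ℝ → ℝ)
    (hL : ContDiff ℝ (⊤ : ℕ∞) fun z : ℝ × ℝ × ℝ => L z.1 z.2.1 z.2.2)
    (hξ : ContDiff ℝ (⊤ : ℕ∞) fun z : ℝ × ℝ => ξ z.1 z.2)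
    (hη : ContDiff ℝ (⊤ : ℕ∞) fun z : ℝ × ℝ => η z.1 z.2)
    (hR : ContDiff ℝ (⊤ : ℕ∞) fun z : ℝ × ℝ => R z.1 z.2)
    (hlam : ContDiff ℝ (⊤ : ℕ∞) fun z : ℝ × ℝ × ℝ => lam z.1 z.2.1 z.2.2)
    (hsym : ∀ x u p : ℝ,
      ξ x u * Lx L x u p + η x u * Lu L x u p + eta1 ξ η lam x u p * Lp L x u p
        + L x u p * (Dx ξ x u p + lam x u p * ξ x u)
      = Dx R x u p + lam x u p * R x u)
    (J : Set ℝ) (hJopen : IsOpen J) (hJconn : J.OrdConnected)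
    (u w : ℝ → ℝ)
    (hu1 : ∀ x ∈ J, DifferentiableAt ℝ u x)
    (hu2 : ∀ x ∈ J, DifferentiableAt ℝ (deriv u) x)
    (hEL : ∀ x ∈ J,
      deriv (fun t => Lp L t (u t) (deriv u t)) x = Lu L x (u x) (deriv u x))
    (hw : ∀ x ∈ J, HasDerivAt w (lam x (u x) (deriv u x)) x) :
    ∀ x ∈ J, ∀ y ∈ J,
      Real.exp (w x) * NoetherI L ξ η R x (u x) (deriv u x)
        = Real.exp (w y) * NoetherI L ξ η R y (u y) (deriv u y) := by
  intro x hx y hy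
  have hL2 : ContDiff ℝ 2 fun z : ℝ × ℝ × ℝ => L z.1 z.2.1 z.2.2 := contDiff_infty.mp hL 2
  have hmomentum : ∀ t ∈ J, HasDerivAt (fun s => Lp L s (u s) (deriv u s))
      (Lu L t (u t) (deriv u t)) t := fun t ht =>
    hEL t ht ▸ (differentiableAt_Lp_comp_curve hL2 (hu1 t ht) (hu2 t ht)).hasDerivAt
  exact lambda_covering_first_integral_general hJconn (fun _ _ => hL2.differentiable two_ne_zero _)
    (fun _ _ => hξ.differentiable (by simp) _) (fun _ _ => hη.differentiable (by simp) _)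
    (fun _ _ => hR.differentiable (by simp) _) (fun t _ => sub_eq_zero.mpr (hsym t _ _))
    (fun t ht => (hu1 t ht).hasDerivAt) hu2 hmomentum hw hx hy
end

section
/- Let J ⊆ ℝ be an open interval, let u : J → ℝ be twice differentiable with u(x) > 0 for all x ∈ J and u''(x) = x²·ln u(x)/u(x) − x²/u(x) + ln u(x) − 1 for all x ∈ J, and let w : J → ℝ be differentiable with w'(x) = x/u(x) for all x ∈ J. Then the function x ↦ e^{w(x)}·(u'(x) − x·ln u(x) + x) is constant on J. -/
/-!
Put `F (x, u) = x ln u - x`, so that `F_u = x / u` and `F_x = ln u - 1`. The equation then reads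
`u'' = F_x + F F_u`, the differential consequence of `u' = F (x, u)`; in terms of the Fréchet
derivative, `F_x + F F_u = F' (1, F)` and `F_u = F' (0, 1)`. The defect `I = u' - F (x, u)`
therefore satisfies the linear equation `I' = -F_u I` along every solution, and `e ^ w` with
`w' = F_u` is its integrating factor.
-/

theorem eq_of_forall_hasDerivWithinAt_zero {𝕜 E : Type*} [RCLike 𝕜] [NormedAddCommGroup E]
    [NormedSpace 𝕜 E] {f : 𝕜 → E} {s : Set 𝕜} (hs : Convex ℝ s)
    (hf : ∀ x ∈ s, HasDerivWithinAt f 0 s x) {x y : 𝕜} (hx : x ∈ s) (hy : y ∈ s) :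
    f x = f y := by
  have h : ‖f x - f y‖ ≤ 0 * ‖x - y‖ :=
    hs.norm_image_sub_le_of_norm_hasDerivWithin_le hf (fun _ _ => norm_zero.le) hy hx
  rwa [zero_mul, norm_le_zero_iff, sub_eq_zero] at h

theorem hasDerivWithinAt_exp_smul_of_neg_smul {E : Type*} [NormedAddCommGroup E] [NormedSpace ℝ E]
    {w : ℝ → ℝ} {v : ℝ → E} {a x : ℝ} {s : Set ℝ} (hw : HasDerivWithinAt w a s x)
    (hv : HasDerivWithinAt v (-a • v x) s x) :
    HasDerivWithinAt (fun t => Real.exp (w t) • v t) 0 s x :=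
  (hw.exp.smul hv).congr_deriv (by module)

theorem hasDerivWithinAt_sub_comp_graph {𝕜 : Type*} [NontriviallyNormedField 𝕜]
    {F : 𝕜 × 𝕜 → 𝕜} {F' : 𝕜 × 𝕜 →L[𝕜] 𝕜} {u p : 𝕜 → 𝕜} {x : 𝕜} {s : Set 𝕜}
    (hF : HasFDerivAt F F' (x, u x)) (hu : HasDerivWithinAt u (p x) s x)
    (hp : HasDerivWithinAt p (F' (1, F (x, u x))) s x) :
    HasDerivWithinAt (fun t => p t - F (t, u t)) (-F' (0, 1) • (p x - F (x, u x))) s x := by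
  have hFu : HasDerivWithinAt (fun t => F (t, u t)) (F' (1, p x)) s x :=
    hF.comp_hasDerivWithinAt x ((hasDerivWithinAt_id x s).prodMk hu)
  refine (hp.sub hFu).congr_deriv ?_
  calc F' (1, F (x, u x)) - F' (1, p x)
      = F' (-(p x - F (x, u x)) • (0, 1)) := by simp [← map_sub]
    _ = -F' (0, 1) • (p x - F (x, u x)) := by
      rw [map_smul, smul_eq_mul, smul_eq_mul, neg_mul_comm, mul_comm]

theorem exp_mul_sub_comp_graph_eq {F : ℝ × ℝ → ℝ} {F' : ℝ → ℝ × ℝ →L[ℝ] ℝ}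
    {u p w : ℝ → ℝ} {J : Set ℝ} (hJ : J.OrdConnected)
    (hF : ∀ x ∈ J, HasFDerivAt F (F' x) (x, u x))
    (hu : ∀ x ∈ J, HasDerivWithinAt u (p x) J x)
    (hp : ∀ x ∈ J, HasDerivWithinAt p (F' x (1, F (x, u x))) J x)
    (hw : ∀ x ∈ J, HasDerivWithinAt w (F' x (0, 1)) J x)
    {x y : ℝ} (hx : x ∈ J) (hy : y ∈ J) :
    Real.exp (w x) * (p x - F (x, u x)) = Real.exp (w y) * (p y - F (y, u y)) :=
  eq_of_forall_hasDerivWithinAt_zero (f := fun t => Real.exp (w t) • (p t - F (t, u t)))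
    hJ.convex
    (fun t ht => hasDerivWithinAt_exp_smul_of_neg_smul (hw t ht)
      (hasDerivWithinAt_sub_comp_graph (hF t ht) (hu t ht) (hp t ht))) hx hy

theorem hasFDerivAt_mul_log_sub {q : ℝ × ℝ} (hq : q.2 ≠ 0) :
    HasFDerivAt (fun r : ℝ × ℝ => r.1 * Real.log r.2 - r.1)
      ((Real.log q.2 - 1) • ContinuousLinearMap.fst ℝ ℝ ℝ
        + (q.1 / q.2) • ContinuousLinearMap.snd ℝ ℝ ℝ) q := by
  refine ((hasFDerivAt_fst.mul (hasFDerivAt_snd.log hq)).sub hasFDerivAt_fst).congr_fderiv ?_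
  module

-- For negative `u`, `Real.log u` means `ln |u|`, still a primitive of `1 / u`.
theorem example_covering_first_integral_general {J : Set ℝ} (hJ : J.OrdConnected)
    {u p w : ℝ → ℝ} (hu : ∀ x ∈ J, HasDerivWithinAt u (p x) J x) (hu₀ : ∀ x ∈ J, u x ≠ 0)
    (hp : ∀ x ∈ J, HasDerivWithinAt p
      (x ^ 2 * Real.log (u x) / u x - x ^ 2 / u x + Real.log (u x) - 1) J x)
    (hw : ∀ x ∈ J, HasDerivWithinAt w (x / u x) J x) {x y : ℝ} (hx : x ∈ J) (hy : y ∈ J) :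
    Real.exp (w x) * (p x - x * Real.log (u x) + x)
      = Real.exp (w y) * (p y - y * Real.log (u y) + y) := by
  have hF t (ht : t ∈ J) := hasFDerivAt_mul_log_sub (q := (t, u t)) (hu₀ t ht)
  have h := exp_mul_sub_comp_graph_eq hJ hF hu
    (fun t ht => (hp t ht).congr_deriv (by
      simp only [add_apply, smul_apply, ContinuousLinearMap.coe_fst',
        ContinuousLinearMap.coe_snd', smul_eq_mul]
      ring))
    (fun t ht => (hw t ht).congr_deriv (by simp)) hx hy
  simpa only [sub_add] using h

/-- Along any solution `(u, w)` of the λ-covering system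
`{u'' = x² ln u / u − x²/u + ln u − 1, w' = x/u}`, the function
`Ĩ = e^w (u' − x ln u + x)` is constant. -/
theorem example_covering_first_integral
    (J : Set ℝ) (hJopen : IsOpen J) (hJconn : J.OrdConnected)
    (u w : ℝ → ℝ)
    (hu1 : ∀ x ∈ J, DifferentiableAt ℝ u x)
    (hu2 : ∀ x ∈ J, DifferentiableAt ℝ (deriv u) x)
    (hupos : ∀ x ∈ J, 0 < u x)
    (hode : ∀ x ∈ J, deriv (deriv u) x
      = x ^ 2 * Real.log (u x) / u x - x ^ 2 / u x + Real.log (u x) - 1)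
    (hw : ∀ x ∈ J, HasDerivAt w (x / u x) x) :
    ∀ x ∈ J, ∀ y ∈ J,
      Real.exp (w x) * (deriv u x - x * Real.log (u x) + x)
        = Real.exp (w y) * (deriv u y - y * Real.log (u y) + y) :=
  fun _ hx _ hy => example_covering_first_integral_general hJconn
    (fun t ht => (hu1 t ht).hasDerivAt.hasDerivWithinAt) (fun t ht => (hupos t ht).ne')
    (fun t ht => hode t ht ▸ (hu2 t ht).hasDerivAt.hasDerivWithinAt)
    (fun t ht => (hw t ht).hasDerivWithinAt) hx hy
end
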